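/- Let X be a set, B > 0, and let F be a class of functions from X to the interval [0, B] whose pseudo-dimension is finite and equal to P with P ≥ 1. Then for every ε with 0 < ε ≤ B, every n ∈ ℕ⁺ and every choice of points x₁,…,x_n ∈ X: C(ε, F|_x, d_∞) ≤ ∑_{i=1}^{P} binom(n, i) (B/ε)^i, where F|_x = {(u(x₁),…,u(x_n)) : u ∈ F} ⊆ ℝ^n; moreover, if n ≥ P then this sum is at most (e n B / (ε P))^P. -/

import Mathlib

/-!
Put `r = B / ε ≥ 1` and cut `[0, B]` into `N + 1 = ⌊r⌋` cells of equal width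
`w = B / (N + 1) < 2ε`, so that the centre of a cell is within `w / 2 < ε` of each of its points.
A function `u ∈ F` is recorded, on the sample, by the set `thresholdSet` of all pairs `(i, j)`,
`i : Fin n`, `j : Fin N`, with `(j + 1) w ≤ u (x i)`; it determines the cell of each `u (x i)`.
Hence the covering number is at most the number of distinct threshold sets.

By the Sauer–Shelah lemma (in Pajor's form, `Finset.card_le_card_shatterer`) this number is at most
the number of sets `S ⊆ Fin n × Fin N` shattered by the threshold sets. Such an `S` has at most
one point `(i, j)` over each sample point `x i`, and the `x i` occurring are pseudo-shattered by
`F`, so `S` is the graph of a partial function with at most `P` points. There are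
`∑_{i ≤ P} binom(n, i) N ^ i` of these. The term `i = 0` is absorbed by the term `i = 1`
because `N + 1 ≤ r`: `n N + 1 ≤ n r`.

The closed form follows from `∑_{i ≤ P} binom(n, i) (P / n) ^ i ≤ (1 + P / n) ^ n ≤ e ^ P`.
-/

/-- The covering number `C(ε, W, d_∞)`: the minimal cardinality of a finite set
`V ⊆ ℝ^n` such that every `w ∈ W` is within `d_∞`-distance `< ε` of some `v ∈ V`.
Note that on `Fin n → ℝ` the metric `dist` is exactly the sup-distance `d_∞`. -/
noncomputable def coveringNumber {n : ℕ} (ε : ℝ) (W : Set (Fin n → ℝ)) : ℕ :=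
  sInf {m : ℕ | ∃ V : Finset (Fin n → ℝ), V.card = m ∧ ∀ w ∈ W, ∃ v ∈ V, dist w v < ε}

/-- The restriction `F|_x = {(u(x₁),…,u(x_n)) : u ∈ F} ⊆ ℝ^n` of a function class `F`
to the sample `x`. -/
def restrictClass {X : Type*} {n : ℕ} (F : Set (X → ℝ)) (x : Fin n → X) :
    Set (Fin n → ℝ) :=
  (fun u : X → ℝ => fun k => u (x k)) '' F

/-- A finite set `s` is pseudo-shattered by the class `F`: there are witnesses `y x`
such that every boolean pattern `b` on `s` is realized as the pattern of
`sign (u x - y x)` (i.e. `u x ≥ y x ↔ b x`) for some `u ∈ F`. -/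
def PseudoShatters {X : Type*} (F : Set (X → ℝ)) (s : Finset X) : Prop :=
  ∃ y : X → ℝ, ∀ b : X → Bool, ∃ u ∈ F, ∀ x ∈ s, (y x ≤ u x ↔ b x = true)

/-- The pseudo-dimension of `F`: the supremum (in `ℕ∞`) of the cardinalities of the
finite sets pseudo-shattered by `F`. -/
noncomputable def pdim {X : Type*} (F : Set (X → ℝ)) : ℕ∞ :=
  ⨆ s ∈ {s : Finset X | PseudoShatters F s}, (s.card : ℕ∞)

/-- The thresholds passed by `u` on the sample `x`: pairs `(i, j)` with `(j + 1) w ≤ u (x i)`. -/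
noncomputable def thresholdSet {X : Type*} {n : ℕ} (x : Fin n → X) (N : ℕ) (w : ℝ) (u : X → ℝ) :
    Finset (Fin n × Fin N) :=
  {p | ((p.2 : ℕ) + 1 : ℝ) * w ≤ u (x p.1)}

lemma mem_thresholdSet {X : Type*} {n : ℕ} (x : Fin n → X) (N : ℕ) (w : ℝ) (u : X → ℝ)
    (p : Fin n × Fin N) :
    p ∈ thresholdSet x N w u ↔ ((p.2 : ℕ) + 1 : ℝ) * w ≤ u (x p.1) := by
  simp [thresholdSet]

lemma card_le_of_pseudoShatters {X : Type*} {F : Set (X → ℝ)} {P : ℕ} (hpdim : pdim F = (P : ℕ∞))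
    {s : Finset X} (hs : PseudoShatters F s) : s.card ≤ P := by
  have h : (s.card : ℕ∞) ≤ pdim F :=
    le_iSup₂ (f := fun (s : Finset X) (_ : s ∈ {s : Finset X | PseudoShatters F s}) =>
      (s.card : ℕ∞)) s hs
  rw [hpdim] at h
  exact_mod_cast h

/-- The number `c` of thresholds `w, 2w, …, N w` passed by `t ∈ [0, (N + 1) w]` identifies a cell
containing `t`, so `t` is within `w / 2` of its centre. -/
lemma abs_sub_cell_center_le (N : ℕ) (w t : ℝ) (hw : 0 < w) (ht0 : 0 ≤ t)
    (ht : t ≤ (N + 1) * w) :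
    |t - (((Finset.univ.filter fun j : Fin N => ((j : ℕ) + 1 : ℝ) * w ≤ t).card : ℝ) + 1 / 2) * w|
      ≤ w / 2 := by
  have hs0 : 0 ≤ t / w := by positivity
  have hcard : (Finset.univ.filter fun j : Fin N => ((j : ℕ) + 1 : ℝ) * w ≤ t).card
      = min N ⌊t / w⌋₊ := by
    rw [← Fin.card_filter_val_lt]
    congr 1
    ext j
    simp only [Finset.mem_filter, Finset.mem_univ, true_and]
    rw [← Nat.succ_le_iff, Nat.le_floor_iff hs0, le_div_iff₀ hw]
    push_cast
    rfl
  rw [hcard]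
  have h1 : ((min N ⌊t / w⌋₊ : ℕ) : ℝ) * w ≤ t := by
    rw [← le_div_iff₀ hw]
    exact le_trans (by exact_mod_cast min_le_right _ _) (Nat.floor_le hs0)
  have h2 : t ≤ (((min N ⌊t / w⌋₊ : ℕ) : ℝ) + 1) * w := by
    rcases min_choice N ⌊t / w⌋₊ with h | h <;> rw [h]
    · exact ht
    · rw [← div_le_iff₀ hw]
      exact (Nat.lt_floor_add_one _).le
  rw [abs_le]
  constructor <;> nlinarith

/-- A set of pairs shattered by the threshold sets of `F` lies injectively over sample points
that form a set pseudo-shattered by `F`. -/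
lemma pseudoShatters_of_shatters {X : Type*} [DecidableEq X] {n : ℕ} {x : Fin n → X} {N : ℕ}
    {w : ℝ} (hw : 0 < w) {F : Set (X → ℝ)} {A : Finset (Finset (Fin n × Fin N))}
    (hA : ∀ T ∈ A, ∃ u ∈ F, thresholdSet x N w u = T)
    {S : Finset (Fin n × Fin N)} (hS : A.Shatters S) :
    Set.InjOn (fun p : Fin n × Fin N => x p.1) S ∧
      PseudoShatters F (S.image fun p => x p.1) := by
  -- Every subset of `S` is cut out by the threshold set of some function of `F`.
  have key : ∀ Q : Fin n × Fin N → Prop, ∃ u ∈ F, ∀ p ∈ S,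
      (((p.2 : ℕ) + 1 : ℝ) * w ≤ u (x p.1) ↔ Q p) := by
    classical
    intro Q
    obtain ⟨T, hT, hST⟩ := hS (Finset.filter_subset Q S)
    obtain ⟨u, hu, rfl⟩ := hA T hT
    refine ⟨u, hu, fun p hp => ?_⟩
    rw [← mem_thresholdSet]
    have := congrArg (p ∈ ·) hST
    simpa [hp] using this
  have hinj : Set.InjOn (fun p : Fin n × Fin N => x p.1) S := by
    -- Of two pairs over one sample point, the higher threshold cannot be passed without the lower.
    have aux : ∀ p ∈ S, ∀ q ∈ S, x p.1 = x q.1 → (p.2 : ℕ) ≤ q.2 → p = q := by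
      intro p hp q hq hx hle
      by_contra hne
      obtain ⟨u, -, hu⟩ := key (fun z => z = q)
      have h1 := (hu q hq).2 rfl
      refine hne ((hu p hp).1 ?_)
      rw [hx]
      refine le_trans ?_ h1
      gcongr
    intro p hp q hq hx
    rcases le_total (p.2 : ℕ) q.2 with h | h
    · exact aux p hp q hq hx h
    · exact (aux q hq p hp hx.symm h).symm
  refine ⟨hinj, ?_⟩
  classical
  let y : X → ℝ := fun a =>
    if h : ∃ p ∈ S, x p.1 = a then ((h.choose.2 : ℕ) + 1 : ℝ) * w else 0
  have hy : ∀ p ∈ S, y (x p.1) = ((p.2 : ℕ) + 1 : ℝ) * w := by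
    intro p hp
    have h : ∃ q ∈ S, x q.1 = x p.1 := ⟨p, hp, rfl⟩
    have hc : h.choose = p := hinj h.choose_spec.1 hp h.choose_spec.2
    simp only [y, dif_pos h, hc]
  refine ⟨y, fun b => ?_⟩
  obtain ⟨u, hu, hup⟩ := key (fun p => b (x p.1) = true)
  refine ⟨u, hu, fun a ha => ?_⟩
  obtain ⟨p, hp, rfl⟩ := Finset.mem_image.1 ha
  rw [hy p hp]
  exact hup p hp

/-- A family of graphs of partial functions `Fin n → Fin N`, each defined at no more than `P`
points, has at most `∑_{k ≤ P} binom(n, k) N ^ k` members. -/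
lemma card_partial_graphs_le (n N P : ℕ) (C : Finset (Finset (Fin n × Fin N)))
    (hinj : ∀ S ∈ C, Set.InjOn (Prod.fst : Fin n × Fin N → Fin n) S)
    (hcard : ∀ S ∈ C, S.card ≤ P) :
    C.card ≤ ∑ k ∈ Finset.range (P + 1), n.choose k * N ^ k := by
  classical
  let G : (I : Finset (Fin n)) → Finset (Finset (Fin n × Fin N)) := fun I =>
    (I.pi fun _ => (Finset.univ : Finset (Fin N))).image fun f =>
      I.attach.image fun i => (i.1, f i.1 i.2)
  have hsub : C ⊆ (Finset.range (P + 1)).biUnion fun k =>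
      ((Finset.univ : Finset (Fin n)).powersetCard k).biUnion G := by
    intro S hS
    have hi := hinj S hS
    simp only [Finset.mem_biUnion, Finset.mem_range, Finset.mem_powersetCard]
    refine ⟨S.card, Nat.lt_succ_of_le (hcard S hS), S.image Prod.fst,
      ⟨Finset.subset_univ _, Finset.card_image_of_injOn hi⟩, ?_⟩
    have hex : ∀ i ∈ S.image Prod.fst, ∃ j, (i, j) ∈ S := by
      intro i h
      obtain ⟨p, hp, rfl⟩ := Finset.mem_image.1 h
      exact ⟨p.2, hp⟩
    choose f hf using hex
    refine Finset.mem_image.2 ⟨f, by simp, ?_⟩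
    ext p
    simp only [Finset.mem_image, Finset.mem_attach, true_and]
    constructor
    · rintro ⟨i, rfl⟩
      exact hf i.1 i.2
    · intro hp
      have hm := Finset.mem_image_of_mem Prod.fst hp
      exact ⟨⟨p.1, hm⟩, hi (hf p.1 hm) hp rfl⟩
  refine (Finset.card_le_card hsub).trans (Finset.card_biUnion_le.trans ?_)
  refine Finset.sum_le_sum fun k _ => ?_
  have hG : ∀ I ∈ (Finset.univ : Finset (Fin n)).powersetCard k, (G I).card ≤ N ^ k := by
    intro I hI
    refine Finset.card_image_le.trans ?_
    simp [Finset.card_pi, (Finset.mem_powersetCard.1 hI).2]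
  refine (Finset.card_biUnion_le_card_mul _ _ _ hG).trans ?_
  simp

lemma coveringNumber_le_sum_range {X : Type*} (B : ℝ) (hB : 0 < B)
    (F : Set (X → ℝ)) (hrange : ∀ u ∈ F, ∀ x : X, u x ∈ Set.Icc (0 : ℝ) B)
    (P : ℕ) (hpdim : pdim F = (P : ℕ∞)) (ε : ℝ) (N : ℕ) (hN : B < 2 * ε * (N + 1))
    (n : ℕ) (hε : 0 < ε) (x : Fin n → X) :
    coveringNumber ε (restrictClass F x) ≤ ∑ k ∈ Finset.range (P + 1), n.choose k * N ^ k := by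
  classical
  obtain ⟨w, hwdef⟩ : ∃ w : ℝ, w = B / (N + 1) := ⟨_, rfl⟩
  have hN1 : (0 : ℝ) < N + 1 := by positivity
  have hw : 0 < w := by rw [hwdef]; positivity
  have hwB : (N + 1) * w = B := by rw [hwdef]; field_simp
  have hwε : w / 2 < ε := by
    have : w < 2 * ε := by rw [hwdef, div_lt_iff₀ hN1]; exact hN
    linarith
  let A : Finset (Finset (Fin n × Fin N)) :=
    Finset.univ.filter fun T => ∃ u ∈ F, thresholdSet x N w u = T
  have hA : ∀ T ∈ A, ∃ u ∈ F, thresholdSet x N w u = T := fun T hT => (Finset.mem_filter.1 hT).2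
  let center : Finset (Fin n × Fin N) → Fin n → ℝ := fun T i =>
    (((Finset.univ.filter fun j : Fin N => (i, j) ∈ T).card : ℝ) + 1 / 2) * w
  have hcover : coveringNumber ε (restrictClass F x) ≤ (A.image center).card := by
    refine Nat.sInf_le ⟨A.image center, rfl, ?_⟩
    rintro _ ⟨u, hu, rfl⟩
    refine ⟨center (thresholdSet x N w u), Finset.mem_image_of_mem _ ?_, ?_⟩
    · exact Finset.mem_filter.2 ⟨Finset.mem_univ _, u, hu, rfl⟩
    · rw [dist_pi_lt_iff hε]
      intro i
      refine lt_of_le_of_lt ?_ hwε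
      obtain ⟨h0, h1⟩ := hrange u hu (x i)
      have := abs_sub_cell_center_le N w (u (x i)) hw h0 (by rw [hwB]; exact h1)
      rw [Real.dist_eq]
      simpa only [center, mem_thresholdSet] using this
  refine hcover.trans (Finset.card_image_le.trans (A.card_le_card_shatterer.trans ?_))
  apply card_partial_graphs_le
  · intro S hS
    have h := (pseudoShatters_of_shatters hw hA (Finset.mem_shatterer.1 hS)).1
    intro p hp q hq hpq
    exact h hp hq (congrArg x hpq)
  · intro S hS
    obtain ⟨h1, h2⟩ := pseudoShatters_of_shatters hw hA (Finset.mem_shatterer.1 hS)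
    rw [← Finset.card_image_of_injOn h1]
    exact card_le_of_pseudoShatters hpdim h2

/-- The term `k = 0` is absorbed by the gap between `N` and `r ≥ N + 1` in the term `k = 1`. -/
lemma sum_range_le_sum_Icc (n N P : ℕ) (r : ℝ) (hP : 1 ≤ P) (hn : 0 < n) (hr : (N : ℝ) + 1 ≤ r) :
    ((∑ k ∈ Finset.range (P + 1), n.choose k * N ^ k : ℕ) : ℝ)
      ≤ ∑ i ∈ Finset.Icc 1 P, (n.choose i : ℝ) * r ^ i := by
  have hN0 : (0 : ℝ) ≤ N := Nat.cast_nonneg N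
  have hsplit : ∀ f : ℕ → ℝ, ∑ i ∈ Finset.Icc 1 P, f i = f 1 + ∑ i ∈ Finset.Icc 2 P, f i :=
    fun f => (Finset.add_sum_Ioc_eq_sum_Icc hP).symm
  have hrange : Finset.range (P + 1) = Finset.Icc 0 P := by
    ext k; simp
  push_cast
  rw [hrange, ← Finset.add_sum_Ioc_eq_sum_Icc (Nat.zero_le P)]
  change _ + ∑ k ∈ Finset.Icc 1 P, _ ≤ _
  rw [hsplit, hsplit]
  have h2 : ∑ i ∈ Finset.Icc 2 P, (n.choose i : ℝ) * (N : ℝ) ^ i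
      ≤ ∑ i ∈ Finset.Icc 2 P, (n.choose i : ℝ) * r ^ i := by
    refine Finset.sum_le_sum fun i _ => ?_
    have : (N : ℝ) ≤ r := by linarith
    gcongr
  have hn1 : (1 : ℝ) ≤ n := by exact_mod_cast hn
  simp only [Nat.choose_zero_right, Nat.choose_one_right, pow_zero, pow_one, Nat.cast_one]
  nlinarith

lemma sum_Icc_le_pow (n P : ℕ) (r : ℝ) (hP : 1 ≤ P) (hPn : P ≤ n) (hr : 1 ≤ r) :
    ∑ i ∈ Finset.Icc 1 P, (n.choose i : ℝ) * r ^ i ≤ (Real.exp 1 * n * r / P) ^ P := by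
  have hP0 : (0 : ℝ) < P := by exact_mod_cast hP
  have hPn' : (P : ℝ) ≤ n := by exact_mod_cast hPn
  have hn0 : (0 : ℝ) < n := by linarith
  have hq : 1 ≤ (n : ℝ) / P := by rwa [one_le_div hP0]
  have hterm : ∀ i ∈ Finset.Icc 1 P, (n.choose i : ℝ) * r ^ i
      ≤ (r * (n / P)) ^ P * ((P / n : ℝ) ^ i * n.choose i) := by
    intro i hi
    have hiP := (Finset.mem_Icc.1 hi).2
    have h1 : r ^ i ≤ r ^ P := pow_le_pow_right₀ hr hiP
    have h2 : ((n : ℝ) / P) ^ i ≤ ((n : ℝ) / P) ^ P := pow_le_pow_right₀ hq hiP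
    have h3 : ((n : ℝ) / P) ^ i * (P / n : ℝ) ^ i = 1 := by
      rw [← mul_pow]
      have : (n : ℝ) / P * (P / n) = 1 := by field_simp
      rw [this, one_pow]
    calc (n.choose i : ℝ) * r ^ i
        = r ^ i * (((n : ℝ) / P) ^ i * (P / n : ℝ) ^ i) * n.choose i := by rw [h3]; ring
      _ ≤ r ^ P * (((n : ℝ) / P) ^ P * (P / n : ℝ) ^ i) * n.choose i := by gcongr
      _ = _ := by rw [mul_pow]; ring
  have hbinom : ∑ i ∈ Finset.Icc 1 P, (P / n : ℝ) ^ i * n.choose i ≤ Real.exp 1 ^ P := by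
    calc ∑ i ∈ Finset.Icc 1 P, (P / n : ℝ) ^ i * n.choose i
        ≤ ∑ i ∈ Finset.range (n + 1), (P / n : ℝ) ^ i * n.choose i := by
          refine Finset.sum_le_sum_of_subset_of_nonneg ?_ fun i _ _ => by positivity
          intro i hi
          have := (Finset.mem_Icc.1 hi).2
          exact Finset.mem_range.2 (by omega)
      _ = (P / n + 1 : ℝ) ^ n := by rw [add_pow]; simp
      _ ≤ Real.exp (P / n) ^ n := by
          gcongr
          exact Real.add_one_le_exp _
      _ = Real.exp 1 ^ P := by
          rw [← Real.exp_nat_mul, ← Real.exp_nat_mul]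
          congr 1
          field_simp
  calc ∑ i ∈ Finset.Icc 1 P, (n.choose i : ℝ) * r ^ i
      ≤ (r * (n / P)) ^ P * ∑ i ∈ Finset.Icc 1 P, (P / n : ℝ) ^ i * n.choose i := by
        rw [Finset.mul_sum]
        exact Finset.sum_le_sum hterm
    _ ≤ (r * (n / P)) ^ P * Real.exp 1 ^ P := by gcongr
    _ = _ := by rw [← mul_pow]; congr 1; ring


/-- Proposition 5.8 of the paper (Theorem 12.2 of Anthony–Bartlett): for a class `F` of
functions with values in `[0, B]` of finite pseudo-dimension `P ≥ 1`, the uniform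
covering number on any sample of size `n` satisfies
`C(ε, F|_x, d_∞) ≤ ∑_{i=1}^P binom(n,i) (B/ε)^i`, and if moreover `n ≥ P` this is
at most `(e n B / (ε P))^P`. -/
theorem stmt_4 {X : Type*} (B : ℝ) (hB : 0 < B)
    (F : Set (X → ℝ)) (hrange : ∀ u ∈ F, ∀ x : X, u x ∈ Set.Icc (0 : ℝ) B)
    (P : ℕ) (hP : 1 ≤ P) (hpdim : pdim F = (P : ℕ∞))
    (ε : ℝ) (hε : 0 < ε) (hεB : ε ≤ B)
    (n : ℕ) (hn : 0 < n) (x : Fin n → X) :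
    ((coveringNumber ε (restrictClass F x) : ℝ)
        ≤ ∑ i ∈ Finset.Icc 1 P, (n.choose i : ℝ) * (B / ε) ^ i)
    ∧ (P ≤ n →
        (coveringNumber ε (restrictClass F x) : ℝ)
          ≤ (Real.exp 1 * n * B / (ε * P)) ^ P) := by
  have hr : 1 ≤ B / ε := by rwa [one_le_div hε]
  -- `N + 1 = ⌊B / ε⌋` cells, hence `N` inner thresholds.
  obtain ⟨N, hN⟩ : ∃ N : ℕ, ⌊B / ε⌋₊ = N + 1 :=
    Nat.exists_eq_succ_of_ne_zero (Nat.floor_pos.2 hr).ne'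
  have hNle : (N : ℝ) + 1 ≤ B / ε := by
    have := Nat.floor_le (zero_le_one.trans hr)
    rw [hN] at this
    exact_mod_cast this
  have hNlt : B < 2 * ε * (N + 1) := by
    have := Nat.lt_floor_add_one (B / ε)
    rw [hN, div_lt_iff₀ hε] at this
    push_cast at this
    have h0 : (0 : ℝ) ≤ N * ε := by positivity
    nlinarith
  have hmain : (coveringNumber ε (restrictClass F x) : ℝ)
      ≤ ∑ i ∈ Finset.Icc 1 P, (n.choose i : ℝ) * (B / ε) ^ i :=
    le_trans (by exact_mod_cast
        coveringNumber_le_sum_range B hB F hrange P hpdim ε N hNlt n hε x)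
      (sum_range_le_sum_Icc n N P (B / ε) hP hn hNle)
  refine ⟨hmain, fun hPn => hmain.trans ?_⟩
  have h := sum_Icc_le_pow n P (B / ε) hP hPn hr
  have heq : Real.exp 1 * n * (B / ε) / P = Real.exp 1 * n * B / (ε * P) := by
    rw [← mul_div_assoc, div_div]
  rwa [heq] at h
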